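/- For an integer J ≥ 0 define m_J(ξ) := (1/(J+1)) · Σ_{j=0}^{J} φ(ξ/2^j). Then: (i) 0 ≤ m_J(ξ) ≤ 1 for every ξ ∈ ℝ; (ii) m_J(ξ) = 1 whenever |ξ| ≤ 1; (iii) m_J(ξ) = 0 whenever |ξ| ≥ 2^{J+1}; (iv) for every ξ ∈ ℝ and every natural number k, 0 ≤ m_J(ξ) − m_J(2^k ξ) ≤ k/(J+1). -/

import Mathlib

/-- The logarithmically averaged multiplier symbol `m_J(ξ) = (1/(J+1)) ∑_{j=0}^J φ(ξ/2^j)`. -/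
noncomputable def mSymbol (φ : ℝ → ℝ) (J : ℕ) (ξ : ℝ) : ℝ :=
  (1 / (J + 1 : ℝ)) * ∑ j ∈ Finset.range (J + 1), φ (ξ / 2 ^ j)

/-- Basic properties of the averaged symbol `m_J`: bounds, value `1` at low
frequencies, vanishing at high frequencies, and the key difference estimate
`0 ≤ m_J(ξ) − m_J(2^k ξ) ≤ k/(J+1)`. -/
theorem mSymbol_properties (φ : ℝ → ℝ)
    (hφ_smooth : ContDiff ℝ (⊤ : ℕ∞) φ)
    (hφ_nonneg : ∀ ξ, 0 ≤ φ ξ) (hφ_le_one : ∀ ξ, φ ξ ≤ 1)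
    (hφ_one : ∀ ξ : ℝ, |ξ| ≤ 1 → φ ξ = 1)
    (hφ_zero : ∀ ξ : ℝ, 2 ≤ |ξ| → φ ξ = 0)
    (hφ_even : ∀ ξ : ℝ, φ (-ξ) = φ ξ)
    (hφ_mono : AntitoneOn φ (Set.Ici 0))
    (J : ℕ) :
    (∀ ξ : ℝ, 0 ≤ mSymbol φ J ξ ∧ mSymbol φ J ξ ≤ 1) ∧
    (∀ ξ : ℝ, |ξ| ≤ 1 → mSymbol φ J ξ = 1) ∧
    (∀ ξ : ℝ, (2 : ℝ) ^ (J + 1) ≤ |ξ| → mSymbol φ J ξ = 0) ∧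
    (∀ ξ : ℝ, ∀ k : ℕ,
      0 ≤ mSymbol φ J ξ - mSymbol φ J (2 ^ k * ξ) ∧
      mSymbol φ J ξ - mSymbol φ J (2 ^ k * ξ) ≤ (k : ℝ) / (J + 1)) := by
  have hJ : (0 : ℝ) < (J : ℝ) + 1 := by positivity
  have habs : ∀ x, φ |x| = φ x := by
    intro x
    rcases abs_choice x with h | h <;> rw [h]
    exact hφ_even x
  have hdbl : ∀ x, φ (2 * x) ≤ φ x := by
    intro x
    rw [← habs (2 * x), ← habs x]
    apply hφ_mono (abs_nonneg x) (abs_nonneg (2 * x))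
    rw [abs_mul, abs_two]
    linarith [abs_nonneg x]
  have htel : ∀ (x : ℝ) (n : ℕ), ∑ j ∈ Finset.range n, φ (x / 2 ^ j)
      - ∑ j ∈ Finset.range n, φ (2 * x / 2 ^ j) = φ (2 * x / 2 ^ n) - φ (2 * x) := by
    intro x n
    induction n with
    | zero => simp
    | succ n ih =>
      rw [Finset.sum_range_succ, Finset.sum_range_succ]
      have h : 2 * x / 2 ^ (n + 1) = x / 2 ^ n := by
        rw [pow_succ]; field_simp
      rw [h]
      linarith
  have hstep : ∀ x, 0 ≤ mSymbol φ J x - mSymbol φ J (2 * x) ∧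
      mSymbol φ J x - mSymbol φ J (2 * x) ≤ 1 / ((J : ℝ) + 1) := by
    intro x
    unfold mSymbol
    rw [← mul_sub]
    constructor
    · apply mul_nonneg (by positivity)
      rw [← Finset.sum_sub_distrib]
      apply Finset.sum_nonneg
      intro j _
      rw [mul_div_assoc]
      linarith [hdbl (x / 2 ^ j)]
    · rw [htel]
      apply mul_le_of_le_one_right (by positivity)
      linarith [hφ_le_one (2 * x / 2 ^ (J + 1)), hφ_nonneg (2 * x)]
  refine ⟨?_, ?_, ?_, ?_⟩
  · intro ξ
    unfold mSymbol
    refine ⟨mul_nonneg (by positivity) (Finset.sum_nonneg fun j _ => hφ_nonneg _), ?_⟩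
    have h : ∑ j ∈ Finset.range (J + 1), φ (ξ / 2 ^ j) ≤ (J : ℝ) + 1 := by
      refine (Finset.sum_le_sum fun j _ => hφ_le_one _).trans ?_
      simp
    rw [one_div_mul_eq_div, div_le_one hJ]
    exact h
  · intro ξ hξ
    unfold mSymbol
    have h : ∑ j ∈ Finset.range (J + 1), φ (ξ / 2 ^ j) = (J : ℝ) + 1 := by
      rw [Finset.sum_congr rfl (g := fun _ => (1 : ℝ))]
      · simp
      · intro j _
        apply hφ_one
        rw [abs_div, abs_of_pos (by positivity : (0 : ℝ) < 2 ^ j), div_le_one (by positivity)]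
        exact hξ.trans (one_le_pow₀ (by norm_num))
    rw [h]
    field_simp
  · intro ξ hξ
    unfold mSymbol
    rw [Finset.sum_eq_zero, mul_zero]
    intro j hj
    apply hφ_zero
    rw [abs_div, abs_of_pos (by positivity : (0 : ℝ) < 2 ^ j), le_div_iff₀ (by positivity),
      ← pow_succ']
    refine le_trans (pow_le_pow_right₀ (by norm_num) ?_) hξ
    have := Finset.mem_range.mp hj
    omega
  · intro ξ k
    induction k with
    | zero => simp
    | succ k ih =>
      have h := hstep (2 ^ k * ξ)
      have e : (2 : ℝ) ^ (k + 1) * ξ = 2 * (2 ^ k * ξ) := by ring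
      rw [e]
      push_cast
      rw [add_div]
      constructor <;> linarith [h.1, h.2, ih.1, ih.2]
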